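/- arXiv:2601.01133 — 2 statements merged into one kernel-verified Lean document; each statement's English description precedes it below -/
import Mathlib

section
/- Let G be a finite nilpotent group such that the difference graph D(G) has at least one vertex. Then the domination number of D(G) equals 1 if and only if G is isomorphic to Z_2 × Q, where Q is a finite group of exponent q for some odd prime q. -/
/-- Adjacency in the difference of the enhanced power graph and the power graph:
`⟨x, y⟩` is cyclic but neither of `x`, `y` is a power of the other. -/
def diffAdj {G : Type*} [Group G] (x y : G) : Prop :=
  IsCyclic (Subgroup.closure ({x, y} : Set G)) ∧
    (¬ ∃ k : ℤ, y = x ^ k) ∧ (¬ ∃ k : ℤ, x = y ^ k)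

/-- The vertex set of the difference graph `𝒟(G)`: the elements of `G` that are
non-isolated in the difference of the enhanced power graph and the power graph. -/
abbrev DiffVertex (G : Type*) [Group G] := {x : G // ∃ y, diffAdj x y}

/-- The difference graph `𝒟(G)` of a group `G`. -/
def diffGraph (G : Type*) [Group G] : SimpleGraph (DiffVertex G) :=
  SimpleGraph.fromRel (fun a b => diffAdj a.val b.val)

/-- A dominating set of a graph: every vertex is in `S` or adjacent to a vertex of `S`. -/
def IsDominatingSet {V : Type*} (Γ : SimpleGraph V) (S : Set V) : Prop :=
  ∀ v : V, v ∈ S ∨ ∃ u ∈ S, Γ.Adj u v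

/-- The domination number of a graph: the least size of a dominating set. -/
noncomputable def dominationNumber {V : Type*} (Γ : SimpleGraph V) : ℕ :=
  sInf {n : ℕ | ∃ S : Set V, IsDominatingSet Γ S ∧ S.ncard = n}

/-- A maximal cyclic subgroup: a cyclic subgroup not properly contained in
another cyclic subgroup. -/
def IsMaxCyclic {G : Type*} [Group G] (C : Subgroup G) : Prop :=
  IsCyclic C ∧ ∀ D : Subgroup G, IsCyclic D → C ≤ D → C = D

theorem dg_cyc {G : Type*} [Group G] {x y g : G} (hx : x ∈ Subgroup.zpowers g)
    (hy : y ∈ Subgroup.zpowers g) : IsCyclic (Subgroup.closure ({x, y} : Set G)) := by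
  have hle : Subgroup.closure ({x, y} : Set G) ≤ Subgroup.zpowers g := by
    rw [Subgroup.closure_le]
    rintro z (rfl | rfl)
    · exact hx
    · exact hy
  exact isCyclic_of_injective (Subgroup.inclusion hle) (Subgroup.inclusion_injective hle)

theorem dg_symm {G : Type*} [Group G] {x y : G} (h : diffAdj x y) : diffAdj y x := by
  obtain ⟨h1, h2, h3⟩ := h
  refine ⟨?_, h3, h2⟩
  rw [Set.pair_comm]; exact h1

theorem dg_gen {G : Type*} [Group G] {x y : G} (h : diffAdj x y) :
    ∃ g : G, x ∈ Subgroup.zpowers g ∧ y ∈ Subgroup.zpowers g := by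
  obtain ⟨⟨g, hg⟩, -, -⟩ := h
  refine ⟨g, ?_, ?_⟩
  · obtain ⟨k, hk⟩ := hg ⟨x, Subgroup.subset_closure (by simp)⟩
    exact ⟨k, by simpa using congrArg Subtype.val hk⟩
  · obtain ⟨k, hk⟩ := hg ⟨y, Subgroup.subset_closure (by simp)⟩
    exact ⟨k, by simpa using congrArg Subtype.val hk⟩

theorem dg_mem {G : Type*} [Group G] {x y : G} (hc : Commute x y)
    (h : (orderOf x).Coprime (orderOf y)) : x ∈ Subgroup.zpowers (x * y) := by
  obtain ⟨m, hm1, hm2⟩ := Nat.chineseRemainder h 1 0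
  refine ⟨(m : ℤ), ?_⟩
  simp only [zpow_natCast]
  rw [hc.mul_pow, (pow_eq_pow_iff_modEq.2 hm1 : x ^ m = x ^ 1),
    (pow_eq_pow_iff_modEq.2 hm2 : y ^ m = y ^ 0)]
  simp

theorem dg_mem' {G : Type*} [Group G] {x y : G} (hc : Commute x y)
    (h : (orderOf x).Coprime (orderOf y)) : y ∈ Subgroup.zpowers (x * y) := by
  rw [hc.eq]; exact dg_mem hc.symm h.symm

theorem dg_ord {G : Type*} [Group G] {x y : G} (h : ∃ k : ℤ, y = x ^ k) :
    orderOf y ∣ orderOf x := by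
  obtain ⟨k, rfl⟩ := h
  exact orderOf_dvd_of_mem_zpowers ⟨k, rfl⟩

theorem dg_adj {G : Type*} [Group G] {x y : G} (hc : Commute x y)
    (h : (orderOf x).Coprime (orderOf y)) (hx : orderOf x ≠ 1) (hy : orderOf y ≠ 1) :
    diffAdj x y := by
  refine ⟨dg_cyc (dg_mem hc h) (dg_mem' hc h), fun hk => hy ?_, fun hk => hx ?_⟩
  · exact Nat.eq_one_of_dvd_coprimes h (dg_ord hk) dvd_rfl
  · exact Nat.eq_one_of_dvd_coprimes h dvd_rfl (dg_ord hk)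

theorem dg_comm {G : Type*} [Group G] [Finite G] (hnil : Group.IsNilpotent G)
    {p q : ℕ} (hp : p.Prime) (hq : q.Prime) (hpq : p ≠ q) {x y : G} {i j : ℕ}
    (hx : orderOf x = p ^ i) (hy : orderOf y = q ^ j) : Commute x y := by
  haveI := Fact.mk hp
  haveI := Fact.mk hq
  have hS := (Group.isNilpotent_of_finite_tfae (G := G)).out 0 3
  have hN := hS.1 hnil
  have hpx : IsPGroup p (Subgroup.zpowers x) := IsPGroup.of_card (n := i) (by rw [Nat.card_zpowers, hx])
  have hpy : IsPGroup q (Subgroup.zpowers y) := IsPGroup.of_card (n := j) (by rw [Nat.card_zpowers, hy])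
  obtain ⟨P, hP⟩ := hpx.exists_le_sylow
  obtain ⟨Q, hQ⟩ := hpy.exists_le_sylow
  have hPn := hN p ⟨hp⟩ P
  have hQn := hN q ⟨hq⟩ Q
  exact Subgroup.commute_of_normal_of_disjoint _ _ hPn hQn
    (IsPGroup.disjoint_of_ne p q hpq _ _ P.isPGroup' Q.isPGroup') x y
    (hP (Subgroup.mem_zpowers x)) (hQ (Subgroup.mem_zpowers y))

/-- uniqueness of the involution inside a cyclic group -/
theorem dg_inv {G : Type*} [Group G] [Finite G] {g a w : G} (ha : a ∈ Subgroup.zpowers g)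
    (hw : w ∈ Subgroup.zpowers g) (ha2 : orderOf a = 2) (hw2 : orderOf w = 2) : w = a := by
  classical
  by_contra hne
  haveI := Fintype.ofFinite (Subgroup.zpowers g)
  have h := IsCyclic.card_pow_eq_one_le (α := Subgroup.zpowers g) (n := 2) (by norm_num)
  have h3 : ({1, ⟨a, ha⟩, ⟨w, hw⟩} : Finset (Subgroup.zpowers g)).card = 3 := by
    rw [Finset.card_eq_three]
    refine ⟨_, _, _, ?_, ?_, ?_, rfl⟩
    · intro h; have := congrArg Subtype.val h; simp at this; rw [← this] at ha2; simp at ha2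
    · intro h; have := congrArg Subtype.val h; simp at this; rw [← this] at hw2; simp at hw2
    · intro h; exact hne (congrArg Subtype.val h).symm
  have hsub : ({1, ⟨a, ha⟩, ⟨w, hw⟩} : Finset (Subgroup.zpowers g)) ⊆
      Finset.univ.filter (fun x => x ^ 2 = 1) := by
    intro z hz
    simp only [Finset.mem_insert, Finset.mem_singleton] at hz
    simp only [Finset.mem_filter, Finset.mem_univ, true_and]
    rcases hz with rfl | rfl | rfl
    · simp
    · ext; simpa [ha2] using pow_orderOf_eq_one a
    · ext; simpa [hw2] using pow_orderOf_eq_one w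
  have := Finset.card_le_card hsub
  omega

theorem dg_order {G : Type*} [Group G] [Finite G] (g : G) {d : ℕ} (hd : d ∣ orderOf g) :
    orderOf (g ^ (orderOf g / d)) = d := by
  rw [orderOf_pow_of_dvd ?_ (Nat.div_dvd_of_dvd hd), Nat.div_div_self hd (orderOf_pos g).ne']
  exact (Nat.div_pos (Nat.le_of_dvd (orderOf_pos g) hd) (Nat.pos_of_dvd_of_pos hd (orderOf_pos g))).ne'

theorem dg_even {G : Type*} [Group G] [Finite G] {a v : G} (ha : orderOf a = 2)
    (hv : 2 ∣ orderOf v) : ¬ diffAdj a v := by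
  intro h
  obtain ⟨g, hag, hvg⟩ := dg_gen h
  have := dg_inv hag (Subgroup.pow_mem _ hvg _) ha (dg_order v hv)
  exact h.2.2 ⟨(orderOf v / 2 : ℕ), by rw [zpow_natCast, this]⟩

theorem dg_fwd {G : Type*} [Group G] [Finite G] (hnil : Group.IsNilpotent G)
    (a : G) (hav : ∃ y, diffAdj a y) (hdom : ∀ v, (∃ y, diffAdj v y) → v = a ∨ diffAdj a v) :
    orderOf a = 2 ∧ ∃ q c, q.Prime ∧ q ≠ 2 ∧ orderOf (c : G) = q ∧
      (∀ b : G, orderOf b = 2 → b = a) ∧ (∀ g : G, orderOf g ∣ 2 * q) := by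
  obtain ⟨y, hay⟩ := hav
  have ha1 : a ≠ 1 := by
    rintro rfl
    exact hay.2.2 ⟨0, by simp⟩
  have ha2 : orderOf a = 2 := by
    have hvi : ∃ y, diffAdj a⁻¹ y := by
      refine ⟨y, ?_, ?_, ?_⟩
      · obtain ⟨g, h1, h2⟩ := dg_gen hay
        exact dg_cyc (Subgroup.inv_mem _ h1) h2
      · rintro ⟨k, hk⟩
        exact hay.2.1 ⟨-k, by rw [hk]; simp⟩
      · rintro ⟨k, hk⟩
        exact hay.2.2 ⟨-k, by rw [zpow_neg, ← hk]; simp⟩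
    rcases hdom _ hvi with h | h
    · rw [orderOf_eq_prime_iff]
      refine ⟨?_, ha1⟩
      rw [pow_two]; nth_rewrite 1 [← h]; simp
    · exact absurd ⟨-1, by simp⟩ h.2.1
  have heven : ∀ v, (∃ y, diffAdj v y) → 2 ∣ orderOf v → v = a := fun v hv h2 =>
    (hdom v hv).resolve_right (dg_even ha2 h2)
  have hyodd : ¬ 2 ∣ orderOf y := fun h => dg_even ha2 h hay
  have hy1 : orderOf y ≠ 1 := by
    rw [Ne, orderOf_eq_one_iff]
    rintro rfl
    exact hay.2.1 ⟨0, by simp⟩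
  obtain ⟨q, hq, hqy⟩ := Nat.exists_prime_and_dvd hy1
  have hq2 : q ≠ 2 := by rintro rfl; exact hyodd hqy
  obtain ⟨c, hc⟩ : ∃ c : G, orderOf c = q := ⟨_, dg_order y hqy⟩
  have hcop2 : Nat.Coprime 2 q := (Nat.coprime_primes Nat.prime_two hq).2 hq2.symm
  refine ⟨ha2, q, c, hq, hq2, hc, ?_, ?_⟩
  · intro b hb
    refine heven b ⟨c, dg_adj (dg_comm hnil Nat.prime_two hq hq2.symm (i := 1) (j := 1)
      (by simpa using hb) (by simpa using hc)) ?_ ?_ ?_⟩ (by rw [hb])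
    · rw [hb, hc]; exact hcop2
    · omega
    · rw [hc]; exact hq.ne_one
  have h4 : ∀ g : G, ¬ 2 ^ 2 ∣ orderOf g := by
    intro g hg
    have hd := dg_order g hg
    set d := g ^ (orderOf g / 2 ^ 2)
    have := heven d ⟨c, dg_adj (dg_comm hnil Nat.prime_two hq hq2.symm (i := 2) (j := 1)
      hd (by simpa using hc)) (by rw [hd, hc]; exact hcop2.pow_left 2) (by omega)
      (by rw [hc]; exact hq.ne_one)⟩ (by rw [hd]; norm_num)
    rw [this] at hd; omega
  have hp : ∀ (g : G) (p : ℕ), p.Prime → p ≠ 2 → p ≠ q → ¬ p ∣ orderOf g := by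
    intro g p hp hp2 hpq hg
    have he := dg_order g hg
    set e := g ^ (orderOf g / p)
    have hae : Commute a e := dg_comm hnil Nat.prime_two hp hp2.symm (i := 1) (j := 1)
      (by simpa using ha2) (by simpa using he)
    have hac : Commute a c := dg_comm hnil Nat.prime_two hq hq2.symm (i := 1) (j := 1)
      (by simpa using ha2) (by simpa using hc)
    have hec : Commute e c := dg_comm hnil hp hq hpq (i := 1) (j := 1)
      (by simpa using he) (by simpa using hc)
    have hcop : Nat.Coprime 2 p := (Nat.coprime_primes Nat.prime_two hp).2 hp2.symm
    have ho : orderOf (a * e) = 2 * p := by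
      rw [hae.orderOf_mul_eq_mul_orderOf_of_coprime (by rw [ha2, he]; exact hcop), ha2, he]
    have := heven (a * e) ⟨c, dg_adj (hac.mul_left hec)
      (by rw [ho, hc]; exact hcop2.mul_left ((Nat.coprime_primes hp hq).2 hpq)) (by omega)
      (by rw [hc]; exact hq.ne_one)⟩ (by rw [ho]; simp)
    rw [this] at ho
    have := hp.two_le
    omega
  have hqq : ∀ g : G, ¬ q ^ 2 ∣ orderOf g := by
    intro g hg
    have hf := dg_order g hg
    set f := g ^ (orderOf g / q ^ 2)
    have haf : Commute a f := dg_comm hnil Nat.prime_two hq hq2.symm (i := 1) (j := 2)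
      (by simpa using ha2) hf
    have hfq : orderOf (f ^ q) = q := by
      rw [orderOf_pow_of_dvd hq.ne_zero (by rw [hf]; exact dvd_pow_self q two_ne_zero), hf, pow_two,
        Nat.mul_div_cancel _ hq.pos]
    have hcp : (orderOf a).Coprime (orderOf f) := by rw [ha2, hf]; exact hcop2.pow_right 2
    have ho : orderOf (a * f ^ q) = 2 * q := by
      rw [(haf.pow_right q).orderOf_mul_eq_mul_orderOf_of_coprime (by rw [ha2, hfq]; exact hcop2),
        ha2, hfq]
    have := heven (a * f ^ q) ⟨f, dg_cyc (g := a * f)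
      (Subgroup.mul_mem _ (dg_mem haf hcp) (Subgroup.pow_mem _ (dg_mem' haf hcp) q))
      (dg_mem' haf hcp), ?_, ?_⟩ (by rw [ho]; simp)
    · rw [this] at ho
      have := hq.two_le
      omega
    · intro hk
      have := dg_ord hk
      rw [hf, ho, pow_two] at this
      have := Nat.dvd_of_mul_dvd_mul_right hq.pos this
      exact hq2 ((Nat.prime_dvd_prime_iff_eq hq Nat.prime_two).1 this)
    · intro hk
      have := dg_ord hk
      rw [hf, ho] at this
      have h2 := Nat.prime_two.dvd_of_dvd_pow ((Dvd.intro _ rfl).trans this)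
      exact hq2 ((Nat.prime_dvd_prime_iff_eq Nat.prime_two hq).1 h2).symm
  intro g
  rw [Nat.dvd_iff_prime_pow_dvd_dvd]
  intro p k hpp hk
  rcases k with _ | _ | k
  · simp
  · simp only [zero_add, pow_one] at hk ⊢
    by_cases h2 : p = 2
    · subst h2; simp
    by_cases h3 : p = q
    · subst h3; simp
    exact absurd hk (hp g p hpp h2 h3)
  · exfalso
    have hk2 : p ^ 2 ∣ orderOf g := (pow_dvd_pow p (by omega)).trans hk
    by_cases h2 : p = 2
    · subst h2; exact h4 g hk2
    by_cases h3 : p = q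
    · subst h3; exact hqq g hk2
    exact hp g p hpp h2 h3 ((dvd_pow_self p two_ne_zero).trans hk2)

theorem dg_struct {G : Type u} [Group G] [Finite G] (hnil : Group.IsNilpotent G)
    (a : G) (ha2 : orderOf a = 2) (q : ℕ) (c : G) (hq : q.Prime) (hq2 : q ≠ 2)
    (hc : orderOf c = q) (hu : ∀ b : G, orderOf b = 2 → b = a)
    (hd : ∀ g : G, orderOf g ∣ 2 * q) :
    ∃ (Q : Type u) (_ : Group Q) (_ : Finite Q),
          Monoid.exponent Q = q ∧
          Nonempty (G ≃* (Multiplicative (ZMod 2) × Q)) := by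
  haveI := Fact.mk hq
  have hN := ((Group.isNilpotent_of_finite_tfae (G := G)).out 0 3).1 hnil
  have hcop2 : Nat.Coprime 2 q := (Nat.coprime_primes Nat.prime_two hq).2 hq2.symm
  let S : Sylow q G := default
  have hSn := hN q ⟨hq⟩ S
  have : Subsingleton (Sylow q G) := (Sylow.unique_of_normal S hSn).instSubsingleton
  have hmem : ∀ x : G, x ^ q = 1 → x ∈ (S : Subgroup G) := by
    intro x hx
    have h : IsPGroup q (Subgroup.zpowers x) := by
      obtain ⟨k, -, hk⟩ := (Nat.dvd_prime_pow hq (m := 1)).1 (by simpa using orderOf_dvd_of_pow_eq_one hx)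
      exact IsPGroup.of_card (n := k) (by rw [Nat.card_zpowers, hk])
    obtain ⟨P, hP⟩ := h.exists_le_sylow
    rw [Subsingleton.elim S P]
    exact hP (Subgroup.mem_zpowers x)
  have hpow : ∀ x ∈ (S : Subgroup G), x ^ q = 1 := by
    intro x hx
    obtain ⟨k, hk⟩ := IsPGroup.iff_orderOf.1 S.isPGroup' ⟨x, hx⟩
    rw [Subgroup.orderOf_mk] at hk
    apply orderOf_dvd_iff_pow_eq_one.1
    refine Nat.Coprime.dvd_of_dvd_mul_left ?_ (hd x)
    rw [hk]; exact (hcop2.pow_right k).symm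
  have hcent : ∀ x : G, Commute a x := by
    intro x
    have : x * a * x⁻¹ = a := hu _ (by
      rw [← ha2]; exact orderOf_injective (MulAut.conj x).toMonoidHom (MulAut.conj x).injective a)
    have h2 : x * a = a * x := by rw [mul_inv_eq_iff_eq_mul] at this; exact this
    exact h2.symm
  have e2 : Multiplicative (ZMod 2) ≃* Subgroup.zpowers a :=
    haveI := Fact.mk Nat.prime_two
    mulEquivOfPrimeCardEq (p := 2) (by simp) (by rw [Nat.card_zpowers, ha2])
  refine ⟨S, inferInstance, inferInstance, ?_, ?_⟩
  · have h1 : Monoid.exponent S ∣ q := Monoid.exponent_dvd_of_forall_pow_eq_one (by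
      rintro ⟨x, hx⟩; ext; simpa using hpow x hx)
    rcases (Nat.dvd_prime hq).1 h1 with h | h
    · exfalso
      have hcS := hmem c (by rw [← hc]; exact pow_orderOf_eq_one c)
      have := Monoid.pow_exponent_eq_one (⟨c, hcS⟩ : S)
      have this := (congrArg (fun n => (⟨c, hcS⟩ : S) ^ n) h).symm.trans this
      simp only [pow_one] at this
      have : c = 1 := congrArg Subtype.val this
      rw [this, orderOf_one] at hc
      exact hq.ne_one hc.symm
    · exact h
  · have hcomm : ∀ (m : Subgroup.zpowers a) (n : S),
        Commute ((Subgroup.zpowers a).subtype m) ((S : Subgroup G).subtype n) := by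
      rintro ⟨m, k, rfl⟩ n
      exact (hcent _).zpow_left k
    let f := MonoidHom.noncommCoprod _ _ hcomm
    have hf : Function.Bijective f := by
      constructor
      · rw [injective_iff_map_eq_one]
        rintro ⟨⟨m, hm⟩, ⟨n, hn⟩⟩ h
        have h : m * n = 1 := h
        have hmn : m = n⁻¹ := eq_inv_of_mul_eq_one_left h
        have h1 : orderOf m ∣ 2 := by
          rw [← ha2]; obtain ⟨k, rfl⟩ := hm; exact orderOf_dvd_of_mem_zpowers ⟨k, rfl⟩
        have h2 : orderOf m ∣ q := by
          rw [hmn, orderOf_inv]; exact orderOf_dvd_of_pow_eq_one (hpow n hn)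
        have h3 : m = 1 := orderOf_eq_one_iff.1 (Nat.eq_one_of_dvd_coprimes hcop2 h1 h2)
        have h4 : n = 1 := by rw [h3] at h; simpa using h
        subst h3 h4; rfl
      · intro g
        have hg := orderOf_dvd_iff_pow_eq_one.1 (hd g)
        have h1 : g ^ q ∈ Subgroup.zpowers a := by
          by_cases h : g ^ q = 1
          · rw [h]; exact Subgroup.one_mem _
          · have : g ^ q = a := hu _ (orderOf_eq_prime (by rw [← pow_mul, mul_comm, hg]) h)
            rw [this]; exact Subgroup.mem_zpowers a
        have h2 : g ^ 2 ∈ (S : Subgroup G) := hmem _ (by rw [← pow_mul, hg])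
        obtain ⟨k, hk⟩ := hq.odd_of_ne_two hq2
        refine ⟨⟨⟨g ^ q, h1⟩, ⟨((g ^ 2) ^ k)⁻¹, Subgroup.inv_mem _ (Subgroup.pow_mem _ h2 k)⟩⟩, ?_⟩
        change g ^ q * ((g ^ 2) ^ k)⁻¹ = g
        rw [hk, ← pow_mul, pow_succ']
        group
    exact ⟨((e2.prodCongr (MulEquiv.refl S)).trans (MulEquiv.ofBijective f hf)).symm⟩

theorem dg_num {V : Type*} [Finite V] [Nonempty V] (Γ : SimpleGraph V) :
    dominationNumber Γ = 1 ↔ ∃ a, ∀ v, v = a ∨ Γ.Adj a v := by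
  unfold dominationNumber
  constructor
  · intro h
    have hm := Nat.sInf_mem (Nat.nonempty_of_pos_sInf (by rw [h]; exact one_pos))
    rw [h] at hm
    obtain ⟨S, hS, hS1⟩ := hm
    obtain ⟨a, rfl⟩ := Set.ncard_eq_one.1 hS1
    exact ⟨a, fun v => by simpa using hS v⟩
  · rintro ⟨a, ha⟩
    have hm : 1 ∈ {n : ℕ | ∃ S : Set V, IsDominatingSet Γ S ∧ S.ncard = n} :=
      ⟨{a}, fun v => by simpa using ha v, by simp⟩
    refine le_antisymm (Nat.sInf_le hm) ?_
    refine le_csInf ⟨1, hm⟩ ?_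
    rintro n ⟨S, hS, rfl⟩
    rw [Nat.one_le_iff_ne_zero]
    intro h0
    rw [Set.ncard_eq_zero] at h0
    subst h0
    simpa using hS (Classical.arbitrary V)

theorem dg_back {G : Type*} [Group G] [Finite G] {Q : Type*} [Group Q] {q : ℕ} (hq : q.Prime)
    (hodd : Odd q) (hQ : Monoid.exponent Q = q) (e : G ≃* (Multiplicative (ZMod 2) × Q))
    (hne : Nonempty (DiffVertex G)) :
    ∃ a : G, (∃ y, diffAdj a y) ∧ ∀ v, (∃ y, diffAdj v y) → v = a ∨ diffAdj a v := by
  have hq2 : q ≠ 2 := by rintro rfl; exact absurd hodd (by decide)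
  have hcop2 : Nat.Coprime 2 q := (Nat.coprime_primes Nat.prime_two hq).2 hq2.symm
  have ht2 : ∀ t : Multiplicative (ZMod 2), t ^ 2 = 1 := by decide
  have hQp : ∀ y : Q, y ^ q = 1 := fun y => by rw [← hQ]; exact Monoid.pow_exponent_eq_one y
  let t : Multiplicative (ZMod 2) := Multiplicative.ofAdd 1
  let a : G := e.symm (t, 1)
  have ha2 : orderOf a = 2 := by
    refine orderOf_eq_prime ?_ ?_
    · apply e.injective
      simp [a, ht2]
    · intro h
      have := congrArg e h
      simp [a, t, Prod.ext_iff] at this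
  have hu : ∀ b : G, orderOf b = 2 → b = a := by
    intro b hb
    have hb2 : (e b) ^ 2 = 1 := by
      rw [← map_pow, orderOf_dvd_iff_pow_eq_one.1 hb.dvd, map_one]
    have h2 : (e b).2 = 1 := by
      apply orderOf_eq_one_iff.1
      exact Nat.eq_one_of_dvd_coprimes hcop2 (orderOf_dvd_of_pow_eq_one (congrArg Prod.snd hb2))
        (orderOf_dvd_of_pow_eq_one (hQp _))
    have h1 : (e b).1 = t := by
      have hh : ∀ s : Multiplicative (ZMod 2), s = 1 ∨ s = Multiplicative.ofAdd 1 := by decide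
      rcases hh (e b).1 with h | h
      · exfalso
        have : e b = 1 := Prod.ext h h2
        have : b = 1 := by simpa using this
        rw [this, orderOf_one] at hb; omega
      · exact h
    apply e.injective
    simp only [a, MulEquiv.apply_symm_apply]
    exact Prod.ext h1 h2
  have hd : ∀ g : G, orderOf g ∣ 2 * q := by
    intro g
    apply orderOf_dvd_of_pow_eq_one
    apply e.injective
    rw [map_pow, map_one]
    ext1
    · rw [Prod.pow_fst, pow_mul, ht2, one_pow]; rfl
    · rw [Prod.pow_snd, mul_comm, pow_mul, hQp, one_pow]; rfl
  have hcent : ∀ x : G, Commute a x := by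
    intro x
    apply e.injective
    simp [a, Prod.ext_iff, mul_comm]
  have key : ∀ v, (∃ y, diffAdj v y) → v = a ∨ diffAdj a v := by
    rintro v ⟨y, hvy⟩
    have hv1 : orderOf v ≠ 1 := by
      rw [Ne, orderOf_eq_one_iff]
      rintro rfl
      exact hvy.2.2 ⟨0, by simp⟩
    have hcases : orderOf v = 2 ∨ orderOf v = q ∨ orderOf v = 2 * q := by
      obtain ⟨d1, d2, h1, h2, h⟩ := Nat.dvd_mul.1 (hd v)
      rcases (Nat.dvd_prime Nat.prime_two).1 h1 with rfl | rfl <;>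
      rcases (Nat.dvd_prime hq).1 h2 with h2 | h2 <;> rw [h2] at h <;> omega
    rcases hcases with h | h | h
    · exact Or.inl (hu v h)
    · exact Or.inr (dg_adj (hcent v) (by rw [ha2, h]; exact hcop2) (by omega) hv1)
    · exfalso
      obtain ⟨g, hvg, hyg⟩ := dg_gen hvy
      have hle : Subgroup.zpowers v ≤ Subgroup.zpowers g := by simpa using hvg
      have heq : Subgroup.zpowers v = Subgroup.zpowers g := by
        apply Subgroup.eq_of_le_of_card_ge hle
        rw [Nat.card_zpowers, Nat.card_zpowers, h]
        exact Nat.le_of_dvd (by have := hq.pos; omega) (hd g)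
      rw [← heq] at hyg
      obtain ⟨k, hk⟩ := hyg
      exact hvy.2.1 ⟨k, hk.symm⟩
  refine ⟨a, ?_, key⟩
  obtain ⟨⟨v, hv⟩⟩ := hne
  rcases key v hv with rfl | h
  · exact hv
  · exact ⟨v, h⟩

/-- Corollary 3.4: for a finite nilpotent group `G` whose difference graph has at least
one vertex, `γ(𝒟(G)) = 1` iff `G ≅ ℤ₂ × Q` for some finite group `Q` of exponent `q`,
where `q` is an odd prime. -/
theorem nilpotent_domination_number_eq_one_iff
    (G : Type u) [Group G] [Finite G] (hnil : Group.IsNilpotent G)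
    (hne : Nonempty (DiffVertex G)) :
    dominationNumber (diffGraph G) = 1 ↔
      ∃ (q : ℕ), q.Prime ∧ Odd q ∧
        ∃ (Q : Type u) (_ : Group Q) (_ : Finite Q),
          Monoid.exponent Q = q ∧
          Nonempty (G ≃* (Multiplicative (ZMod 2) × Q)) := by
  have hnum := dg_num (diffGraph G)
  rw [hnum]
  constructor
  · rintro ⟨⟨a, hav⟩, ha⟩
    obtain ⟨ha2, q, c, hq, hq2, hc, hu, hd⟩ := dg_fwd hnil a hav (by
      intro v hv
      rcases ha ⟨v, hv⟩ with h | h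
      · exact Or.inl (congrArg Subtype.val h)
      · rw [diffGraph, SimpleGraph.fromRel_adj] at h
        exact Or.inr (h.2.elim id dg_symm))
    exact ⟨q, hq, hq.odd_of_ne_two hq2, dg_struct hnil a ha2 q c hq hq2 hc hu hd⟩
  · rintro ⟨q, hq, hodd, Q, _, _, hQ, ⟨e⟩⟩
    obtain ⟨a, hav, ha⟩ := dg_back hq hodd hQ e hne
    refine ⟨⟨a, hav⟩, ?_⟩
    rintro ⟨v, hv⟩
    by_cases hva : v = a
    · exact Or.inl (Subtype.ext hva)
    · refine Or.inr ?_
      rw [diffGraph, SimpleGraph.fromRel_adj]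
      exact ⟨fun h => hva (congrArg Subtype.val h).symm, Or.inl ((ha v hv).resolve_left hva)⟩
end

section
/- Let m ≥ 2 be a positive integer that is not a power of 2, and let Q_{4m} be the generalized quaternion group of order 4m. Then the diameter of the difference graph D(Q_{4m}) equals 2 if 2m is square-free, and equals 3 otherwise. -/
/-- Incomparability with respect to divisibility. -/
def Inc (d e : ℕ) : Prop := ¬ d ∣ e ∧ ¬ e ∣ d

theorem Inc.symm' {d e : ℕ} (h : Inc d e) : Inc e d := ⟨h.2, h.1⟩

theorem inc_primes {q r k d : ℕ} (hq : q.Prime) (hr : r.Prime) (hne : r ≠ q)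
    (hd : d ∣ q ^ k) (h1 : d ≠ 1) : Inc d r := by
  have hc : Nat.Coprime (q ^ k) r := Nat.Coprime.pow_left k ((Nat.coprime_primes hq hr).2 hne.symm)
  have hc' : Nat.Coprime d r := Nat.Coprime.coprime_dvd_left hd hc
  constructor
  · intro h
    exact h1 (Nat.eq_one_of_dvd_coprimes hc' dvd_rfl h)
  · intro h
    exact hr.one_lt.ne' (Nat.eq_one_of_dvd_coprimes hc'.symm dvd_rfl h)

theorem three_dvd {n d e : ℕ}
    (hpp : ∀ q : ℕ, q.Prime → ∃ r : ℕ, r.Prime ∧ r ≠ q ∧ r ∣ n)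
    (hd1 : d ≠ 1) (he1 : e ≠ 1) (hen : ¬ n ∣ e) (hde : d ∣ e) :
    (∃ f, f ∣ n ∧ Inc d f ∧ Inc f e) ∨
    (∃ f h, f ∣ n ∧ h ∣ n ∧ Inc d f ∧ Inc f h ∧ Inc h e) := by
  rw [Nat.dvd_iff_prime_pow_dvd_dvd] at hen
  push Not at hen
  obtain ⟨q, k, hq, hqn, hqe⟩ := hen
  obtain ⟨r, hr, hrq, hrn⟩ := hpp q hq
  by_cases hdq : d ∣ q ^ k
  · by_cases heq : e ∣ q ^ k
    · exact Or.inl ⟨r, hrn, inc_primes hq hr hrq hdq hd1, (inc_primes hq hr hrq heq he1).symm'⟩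
    · refine Or.inr ⟨r, q ^ k, hrn, hqn, inc_primes hq hr hrq hdq hd1,
        (inc_primes hq hr hrq dvd_rfl ?_).symm', hqe, heq⟩
      intro h
      exact hqe (h ▸ one_dvd e)
  · exact Or.inl ⟨q ^ k, hqn, ⟨hdq, fun h => hqe (h.trans hde)⟩, hqe,
      fun h => hdq (hde.trans h)⟩

theorem two_dvd {n d e : ℕ} (hs : Squarefree n) (hd1 : d ≠ 1) (hen : ¬ n ∣ e) (hde : d ∣ e) :
    ∃ f, f ∣ n ∧ Inc d f ∧ Inc f e := by
  rw [Nat.dvd_iff_prime_pow_dvd_dvd] at hen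
  push Not at hen
  obtain ⟨q, k, hq, hqn, hqe⟩ := hen
  have hk : k ≤ 1 := by
    by_contra hk
    have h2 : q * q ∣ n := (by rw [← sq]; exact (pow_dvd_pow q (by omega : 2 ≤ k)).trans hqn)
    exact hq.one_lt.ne' (Nat.isUnit_iff.1 (hs q h2))
  have hk1 : k = 1 := by
    rcases Nat.le_one_iff_eq_zero_or_eq_one.1 hk with h | h
    · subst h; simp at hqe
    · exact h
  subst hk1
  rw [pow_one] at hqn hqe
  have hdq : ¬ d ∣ q := by
    intro h
    rcases (Nat.dvd_prime hq).1 h with h | h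
    · exact hd1 h
    · exact hqe (h ▸ hde)
  exact ⟨q, hqn, ⟨hdq, fun h => hqe (h.trans hde)⟩, hqe, fun h => hdq (hde.trans h)⟩

section grp
variable {G : Type*} [Group G]

theorem mem_zp_iff {g x y : G} (hg : IsOfFinOrder g) (hx : x ∈ Subgroup.zpowers g)
    (hy : y ∈ Subgroup.zpowers g) : (∃ k : ℤ, y = x ^ k) ↔ orderOf y ∣ orderOf x := by
  constructor
  · rintro ⟨k, rfl⟩
    exact orderOf_dvd_of_mem_zpowers (Subgroup.zpow_mem_zpowers x k)
  · intro h
    have hn : 0 < orderOf g := orderOf_pos_iff.2 hg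
    obtain ⟨i, rfl⟩ := Subgroup.mem_zpowers_iff.1 hx
    obtain ⟨j, rfl⟩ := Subgroup.mem_zpowers_iff.1 hy
    -- the power of the second exponent killed by the order of the first
    have h1 : (g ^ j) ^ orderOf (g ^ i) = 1 := orderOf_dvd_iff_pow_eq_one.1 h
    obtain ⟨d, hd⟩ : ∃ d, Int.gcd (orderOf g) i = d := ⟨_, rfl⟩
    obtain ⟨c, hc⟩ : (d : ℤ) ∣ orderOf g := hd ▸ Int.gcd_dvd_left _ _
    obtain ⟨e, he⟩ : (d : ℤ) ∣ i := hd ▸ Int.gcd_dvd_right _ _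
    have hc0 : c ≠ 0 := by rintro rfl; rw [mul_zero] at hc; omega
    -- c divides the order of g ^ i
    have hd0 : (d : ℤ) ≠ 0 := by rintro h0; rw [h0, zero_mul] at hc; omega
    have hbez : (d : ℤ) = orderOf g * Int.gcdA (orderOf g) i + i * Int.gcdB (orderOf g) i := by
      rw [← hd]; exact Int.gcd_eq_gcd_ab _ _
    have h2 : g ^ (j * c) = 1 := by
      have h3 : orderOf (g ^ i) ∣ c.natAbs := by
        rw [orderOf_dvd_iff_pow_eq_one, ← zpow_natCast, ← zpow_mul,
          ← orderOf_dvd_iff_zpow_eq_one, Int.natCast_natAbs]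
        have : (orderOf g : ℤ) ∣ i * c := ⟨e, by rw [hc, he]; ring⟩
        rcases abs_choice c with h | h <;> rw [h]
        · exact this
        · rw [mul_neg]; exact this.neg_right
      have h4 := h.trans h3
      rw [orderOf_dvd_iff_pow_eq_one, ← zpow_natCast, ← zpow_mul,
          ← orderOf_dvd_iff_zpow_eq_one, Int.natCast_natAbs] at h4
      rw [← orderOf_dvd_iff_zpow_eq_one]
      rcases abs_choice c with h | h <;> rw [h] at h4
      · exact h4
      · rw [mul_neg] at h4; exact (dvd_neg.1 h4)
    rw [← orderOf_dvd_iff_zpow_eq_one, hc] at h2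
    obtain ⟨t, rfl⟩ := Int.dvd_of_mul_dvd_mul_right hc0 h2
    refine ⟨Int.gcdB (orderOf g) i * t, ?_⟩
    rw [← zpow_mul, ← mul_assoc, eq_sub_of_add_eq' hbez.symm, sub_mul, zpow_sub, mul_assoc,
      zpow_mul g (orderOf g : ℤ), zpow_natCast, pow_orderOf_eq_one]
    simp

theorem diffAdj_iff {g x y : G} (hg : IsOfFinOrder g) (hx : x ∈ Subgroup.zpowers g)
    (hy : y ∈ Subgroup.zpowers g) : diffAdj x y ↔ Inc (orderOf x) (orderOf y) := by
  unfold diffAdj Inc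
  rw [mem_zp_iff hg hx hy, mem_zp_iff hg hy hx]
  constructor
  · rintro ⟨_, h1, h2⟩; exact ⟨h2, h1⟩
  · rintro ⟨h1, h2⟩
    refine ⟨?_, h2, h1⟩
    have hle : Subgroup.closure ({x, y} : Set G) ≤ Subgroup.zpowers g := by
      rw [Subgroup.closure_le]
      rintro z (rfl | rfl)
      · exact hx
      · exact hy
    exact Subgroup.isCyclic_of_le hle

theorem exists_ord {g : G} {n : ℕ} (hn : 0 < n) (hg : orderOf g = n) {d : ℕ} (hd : d ∣ n) :
    ∃ x ∈ Subgroup.zpowers g, orderOf x = d := by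
  obtain ⟨c, rfl⟩ := hd
  refine ⟨g ^ c, Subgroup.npow_mem_zpowers g c, ?_⟩
  have hc : c ≠ 0 := by rintro rfl; simp at hn
  rw [orderOf_pow_of_dvd hc (hg ▸ Dvd.intro_left d rfl), hg, Nat.mul_div_cancel _ (by omega)]

theorem graph_diam {g : G} {n : ℕ} (hn : 0 < n) (hg : orderOf g = n)
    (hpp : ∀ q : ℕ, q.Prime → ∃ r : ℕ, r.Prime ∧ r ≠ q ∧ r ∣ n)
    (hodd : ∃ p : ℕ, p.Prime ∧ p ≠ 2 ∧ p ∣ n)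
    (hV : ∀ x y : G, diffAdj x y → x ∈ Subgroup.zpowers g) :
    (diffGraph G).diam = if Squarefree n then 2 else 3 := by
  have hfin : IsOfFinOrder g := orderOf_pos_iff.1 (hg ▸ hn)
  have hsymm : ∀ x y : G, diffAdj x y → diffAdj y x := by
    rintro x y ⟨h1, h2, h3⟩
    exact ⟨by rwa [Set.pair_comm], h3, h2⟩
  have hmem : ∀ v : DiffVertex G, v.val ∈ Subgroup.zpowers g := fun v => by
    obtain ⟨y, hy⟩ := v.2
    exact hV _ _ hy
  have hdvd : ∀ x ∈ Subgroup.zpowers g, orderOf x ∣ n := fun x hx => by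
    rw [← hg]; exact orderOf_dvd_of_mem_zpowers hx
  have hadj : ∀ u v : DiffVertex G, (diffGraph G).Adj u v ↔
      Inc (orderOf u.val) (orderOf v.val) := by
    intro u v
    rw [diffGraph, SimpleGraph.fromRel_adj, diffAdj_iff hfin (hmem u) (hmem v),
      diffAdj_iff hfin (hmem v) (hmem u)]
    constructor
    · rintro ⟨_, h | h⟩
      · exact h
      · exact h.symm'
    · intro h
      refine ⟨?_, Or.inl h⟩
      rintro rfl
      exact h.1 dvd_rfl
  have hv1 : ∀ v : DiffVertex G, orderOf v.val ≠ 1 := fun v h => by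
    obtain ⟨y, hy⟩ := v.2
    have := (diffAdj_iff hfin (hmem v) (hV _ _ (hsymm _ _ hy))).1 hy
    exact this.1 (h ▸ one_dvd _)
  have hvn : ∀ v : DiffVertex G, ¬ n ∣ orderOf v.val := fun v h => by
    obtain ⟨y, hy⟩ := v.2
    have hy' := hV _ _ (hsymm _ _ hy)
    have := (diffAdj_iff hfin (hmem v) hy').1 hy
    exact this.2 ((hdvd y hy').trans h)
  have hex : ∀ x y : G, x ∈ Subgroup.zpowers g → y ∈ Subgroup.zpowers g →
      Inc (orderOf x) (orderOf y) → ∃ v : DiffVertex G, v.val = x := fun x y hx hy h =>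
    ⟨⟨x, y, (diffAdj_iff hfin hx hy).2 h⟩, rfl⟩
  have hexv : ∀ (v : DiffVertex G) (f : ℕ), f ∣ n → Inc (orderOf v.val) f →
      ∃ w : DiffVertex G, orderOf w.val = f := by
    intro v f hf h
    obtain ⟨x, hx, rfl⟩ := exists_ord hn hg hf
    obtain ⟨w, rfl⟩ := hex x v.val hx (hmem v) h.symm'
    exact ⟨w, rfl⟩
  -- two and three step paths
  have path2 : ∀ u v w : DiffVertex G, Inc (orderOf u.val) (orderOf v.val) →
      Inc (orderOf v.val) (orderOf w.val) → (diffGraph G).edist u w ≤ 2 := by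
    intro u v w h1 h2
    exact ((diffGraph G).edist_le (.cons ((hadj _ _).2 h1) (.cons ((hadj _ _).2 h2) .nil)))
  have path3 : ∀ u v w z : DiffVertex G, Inc (orderOf u.val) (orderOf v.val) →
      Inc (orderOf v.val) (orderOf w.val) → Inc (orderOf w.val) (orderOf z.val) →
      (diffGraph G).edist u z ≤ 3 := by
    intro u v w z h1 h2 h3
    exact ((diffGraph G).edist_le (.cons ((hadj _ _).2 h1) (.cons ((hadj _ _).2 h2)
      (.cons ((hadj _ _).2 h3) .nil))))
  have le_of : ∀ k : ℕ∞, 1 ≤ k → (∀ u v : DiffVertex G, orderOf u.val ∣ orderOf v.val →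
      (diffGraph G).edist u v ≤ k) → (diffGraph G).ediam ≤ k := by
    intro k hk h
    apply SimpleGraph.ediam_le_of_edist_le
    intro u v
    by_cases h1 : orderOf u.val ∣ orderOf v.val
    · exact h u v h1
    by_cases h2 : orderOf v.val ∣ orderOf u.val
    · rw [SimpleGraph.edist_comm]; exact h v u h2
    · exact (SimpleGraph.edist_eq_one_iff_adj.2 ((hadj u v).2 ⟨h1, h2⟩)).le.trans hk
  split_ifs with hs
  · have hle : (diffGraph G).ediam ≤ 2 := by
      apply le_of 2 (by norm_num)
      intro u v huv
      obtain ⟨f, hf, h1, h2⟩ := two_dvd hs (hv1 u) (hvn v) huv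
      obtain ⟨w, rfl⟩ := hexv u f hf h1
      exact path2 u w v h1 h2
    have hge : 2 ≤ (diffGraph G).ediam := by
      obtain ⟨p, hp, hp2, hpn⟩ := hodd
      obtain ⟨r, hr, hrp, hrn⟩ := hpp p hp
      obtain ⟨x, hx, hxo⟩ := exists_ord hn hg hpn
      obtain ⟨y, hy, hyo⟩ := exists_ord hn hg hrn
      have hpr : Inc p r := inc_primes (k := 1) hp hr hrp (by simp) hp.one_lt.ne'
      obtain ⟨u, hu⟩ := hex x y hx hy (by rw [hxo, hyo]; exact hpr)
      obtain ⟨v, hv⟩ := hex x⁻¹ y (inv_mem hx) hy (by rw [orderOf_inv, hxo, hyo]; exact hpr)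
      have hne : u ≠ v := by
        rintro rfl
        have h : x = x⁻¹ := hu.symm.trans hv
        have h2 : x ^ 2 = 1 := by rw [sq]; nth_rewrite 2 [h]; simp
        have := orderOf_dvd_of_pow_eq_one h2
        rw [hxo] at this
        exact hp2 ((Nat.prime_dvd_prime_iff_eq hp Nat.prime_two).1 this)
      have : ¬ (diffGraph G).edist u v ≤ 1 := by
        rw [SimpleGraph.edist_le_one_iff_adj_or_eq]
        rintro (h | h)
        · have := ((hadj u v).1 h).1
          rw [hu, hv, orderOf_inv] at this
          exact this dvd_rfl
        · exact hne h
      have h2 : (2 : ℕ∞) ≤ (diffGraph G).edist u v := by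
        have := Order.add_one_le_of_lt (not_le.1 this)
        rwa [one_add_one_eq_two] at this
      exact h2.trans SimpleGraph.edist_le_ediam
    rw [SimpleGraph.diam, le_antisymm hle hge]
    rfl
  · have hle : (diffGraph G).ediam ≤ 3 := by
      apply le_of 3 (by norm_num)
      intro u v huv
      rcases three_dvd hpp (hv1 u) (hv1 v) (hvn v) huv with
        ⟨f, hf, h1, h2⟩ | ⟨f, h, hf, hh, h1, h2, h3⟩
      · obtain ⟨w, rfl⟩ := hexv u f hf h1
        exact (path2 u w v h1 h2).trans (by norm_num)
      · obtain ⟨w, rfl⟩ := hexv u f hf h1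
        obtain ⟨z, rfl⟩ := hexv w h hh h2
        exact path3 u w z v h1 h2 h3
    have hge : 3 ≤ (diffGraph G).ediam := by
      rw [Nat.squarefree_iff_prime_squarefree] at hs
      push Not at hs
      obtain ⟨p, hp, c, hc⟩ := hs
      obtain ⟨r, hr, hrp, hrn⟩ := hpp p hp
      have hc0 : 0 < c := by
        rcases Nat.eq_zero_or_pos c with h | h
        · subst h; simp at hc; omega
        · exact h
      have hrc : r ∣ c := by
        have hcop := (Nat.coprime_primes hr hp).2 hrp
        rw [hc] at hrn
        exact (Nat.Coprime.mul_right hcop hcop).dvd_of_dvd_mul_left hrn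
      have hpn : p ∣ n := ⟨p * c, by rw [hc]; ring⟩
      have hpcn : p * c ∣ n := ⟨p, by rw [hc]; ring⟩
      have hpr : Inc p r := inc_primes (k := 1) hp hr hrp (by simp) hp.one_lt.ne'
      -- a prime power not dividing p * c
      have hnd : ¬ n ∣ p * c := by
        intro h
        have := Nat.le_of_dvd (Nat.mul_pos hp.pos hc0) h
        rw [hc] at this
        have h2 := hp.two_le
        have h3 := Nat.mul_pos hp.pos hc0
        nlinarith
      obtain ⟨x, hx, hxo⟩ := exists_ord hn hg hpn
      obtain ⟨y, hy, hyo⟩ := exists_ord hn hg hpcn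
      obtain ⟨z, hz, hzo⟩ := exists_ord hn hg hrn
      obtain ⟨u, hu⟩ := hex x z hx hz (by rw [hxo, hzo]; exact hpr)
      have hyv : ∃ f, f ∣ n ∧ Inc (p * c) f := by
        rw [Nat.dvd_iff_prime_pow_dvd_dvd] at hnd
        push Not at hnd
        obtain ⟨q, k, hq, hqn, hqe⟩ := hnd
        refine ⟨q ^ k, hqn, ?_, hqe⟩
        intro h
        have h1 : p = q := (Nat.prime_dvd_prime_iff_eq hp hq).1
          (hp.dvd_of_dvd_pow ((Dvd.intro c rfl).trans h))
        have h2 : r = q := (Nat.prime_dvd_prime_iff_eq hr hq).1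
          (hr.dvd_of_dvd_pow ((hrc.trans (Dvd.intro_left p rfl)).trans h))
        exact hrp (h2.trans h1.symm)
      obtain ⟨f, hf, hif⟩ := hyv
      obtain ⟨t, ht, hto⟩ := exists_ord hn hg hf
      obtain ⟨v, hv⟩ := hex y t hy ht (by rw [hyo, hto]; exact hif)
      have huo : orderOf u.val = p := by rw [hu, hxo]
      have hvo : orderOf v.val = p * c := by rw [hv, hyo]
      have h2 : 2 < (diffGraph G).edist u v := by
        rw [SimpleGraph.two_lt_edist_iff]
        refine ⟨?_, ?_, ?_⟩
        · rintro rfl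
          rw [huo] at hvo
          have : r ∣ p := hvo ▸ hrc.mul_left p
          exact hpr.2 this
        · intro h
          have := ((hadj u v).1 h).1
          rw [huo, hvo] at this
          exact this (Dvd.intro c rfl)
        · rw [Set.eq_empty_iff_forall_notMem]
          intro w hw
          rw [SimpleGraph.mem_commonNeighbors] at hw
          have h1 := ((hadj u w).1 hw.1).1
          have h2 := ((hadj v w).1 hw.2).2
          rw [huo] at h1
          rw [hvo] at h2
          have h3 := hdvd _ (hmem w)
          have hcop : Nat.Coprime (orderOf w.val) p := ((hp.coprime_iff_not_dvd).2 h1).symm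
          rw [hc, mul_assoc] at h3
          exact h2 (hcop.dvd_of_dvd_mul_left h3)
      have h3 : (3 : ℕ∞) ≤ (diffGraph G).edist u v := by
        have := Order.add_one_le_of_lt h2
        rwa [two_add_one_eq_three] at this
      exact h3.trans SimpleGraph.edist_le_ediam
    rw [SimpleGraph.diam, le_antisymm hle hge]
    rfl
end grp

theorem quat_a_mem {m : ℕ} [NeZero m] {z : QuaternionGroup m}
    (hz : z ∈ Subgroup.zpowers (QuaternionGroup.a 1 : QuaternionGroup m)) :
    ∃ i, z = QuaternionGroup.a i := by
  rw [mem_zpowers_iff_mem_range_orderOf] at hz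
  simp at hz
  obtain ⟨k, _, rfl⟩ := hz
  exact ⟨_, rfl⟩

theorem quat_mem_a {m : ℕ} [NeZero m] (i : ZMod (2 * m)) :
    QuaternionGroup.a i ∈ Subgroup.zpowers (QuaternionGroup.a 1 : QuaternionGroup m) := by
  have : NeZero (2 * m) := ⟨by have := NeZero.ne m; omega⟩
  have h := QuaternionGroup.a_one_pow (n := m) i.val
  rw [ZMod.natCast_zmod_val] at h
  rw [← h]
  exact Subgroup.npow_mem_zpowers _ _

theorem quat_vertex {m : ℕ} [NeZero m] (x y : QuaternionGroup m) (h : diffAdj x y) :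
    x ∈ Subgroup.zpowers (QuaternionGroup.a 1 : QuaternionGroup m) := by
  rcases x with i | i
  · exact quat_mem_a i
  exfalso
  obtain ⟨h1, h2, _⟩ := h
  obtain ⟨z, hz⟩ := (Subgroup.isCyclic_iff_exists_zpowers_eq_top _).1 h1
  have hx : QuaternionGroup.xa i ∈ Subgroup.zpowers z := by
    rw [hz]; exact Subgroup.subset_closure (by simp)
  have hy : y ∈ Subgroup.zpowers z := by
    rw [hz]; exact Subgroup.subset_closure (by simp)
  rcases z with k | k
  · have hle := (Subgroup.zpowers_le (H := Subgroup.zpowers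
      (QuaternionGroup.a 1 : QuaternionGroup m))).2 (quat_mem_a k)
    obtain ⟨j, hj⟩ := quat_a_mem (hle hx)
    cases hj
  · have hle := Subgroup.zpowers_le.2 hx
    have : Subgroup.zpowers (QuaternionGroup.xa i : QuaternionGroup m) =
        Subgroup.zpowers (QuaternionGroup.xa k) := by
      apply Subgroup.eq_of_le_of_card_ge hle
      rw [Nat.card_zpowers, Nat.card_zpowers, QuaternionGroup.orderOf_xa,
        QuaternionGroup.orderOf_xa]
    rw [← this, Subgroup.mem_zpowers_iff] at hy
    obtain ⟨t, ht⟩ := hy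
    exact h2 ⟨t, ht.symm⟩

/-- Corollary 4.4: for `m ≥ 2` not a power of `2`, the diameter of the difference graph
of the generalized quaternion group of order `4m` is `2` if `2m` is square-free and `3`
otherwise. -/
theorem quaternion_diffGraph_diam
    (m : ℕ) (hm : 2 ≤ m) (h2 : ¬ ∃ k : ℕ, m = 2 ^ k) :
    (diffGraph (QuaternionGroup m)).diam = if Squarefree (2 * m) then 2 else 3 := by
  have : NeZero m := ⟨by omega⟩
  have hodd : ∃ p : ℕ, p.Prime ∧ p ≠ 2 ∧ p ∣ 2 * m := by
    rcases Nat.eq_two_pow_or_exists_odd_prime_and_dvd m with ⟨k, hk⟩ | ⟨p, hp, hpm, ho⟩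
    · exact absurd ⟨k, hk⟩ h2
    · refine ⟨p, hp, ?_, hpm.mul_left 2⟩
      rintro rfl
      exact absurd ho (by decide)
  refine graph_diam (g := QuaternionGroup.a 1) (by omega) QuaternionGroup.orderOf_a_one
    ?_ hodd quat_vertex
  intro q hq
  obtain ⟨p, hp, hp2, hpn⟩ := hodd
  by_cases h : q = 2
  · exact ⟨p, hp, h ▸ hp2, hpn⟩
  · exact ⟨2, Nat.prime_two, Ne.symm h, Dvd.intro m rfl⟩
end
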